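/- arXiv:1506.06383 — 2 statements merged into one kernel-verified Lean document; each statement's English description precedes it below -/
import Mathlib

section
/- Let d ≥ 2, let φ : ℝ^d → ℝ be smooth with compact support, and for t > 0 let φ_t(x) = t^{-d} φ(x/t). Then there is a constant C (depending only on φ and d) such that |(-Δ)^{1/2}[φ_t](x)| ≤ C (t + |x|)^{-d-1} for all t > 0 and x ∈ ℝ^d. -/
open MeasureTheory Real Metric Set
open scoped FourierTransform ENNReal
noncomputable section

/-- The Riesz potential normalizing constant. -/
def rieszConst (d : ℕ) (a : ℝ) : ℝ :=
  Real.Gamma (((d : ℝ) - a) / 2) / (2 ^ a * Real.pi ^ ((d : ℝ) / 2) * Real.Gamma (a / 2))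

/-- The Riesz potential `I_a[f]`. -/
def rieszPotential (d : ℕ) (a : ℝ) (f : EuclideanSpace ℝ (Fin d) → ℝ)
    (x : EuclideanSpace ℝ (Fin d)) : ℝ :=
  rieszConst d a * ∫ y, f y * ‖x - y‖ ^ (a - (d : ℝ))

/-- `(-Δ)^{1/2}`, the Fourier multiplier with symbol `|ξ|`. -/
def halfLaplacian (d : ℕ) (φ : EuclideanSpace ℝ (Fin d) → ℝ)
    (x : EuclideanSpace ℝ (Fin d)) : ℝ :=
  (𝓕⁻ (fun ξ : EuclideanSpace ℝ (Fin d) => (‖ξ‖ : ℂ) * 𝓕 (fun y => (φ y : ℂ)) ξ) x).re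

/-- Hausdorff content of order `α` via coverings by closed balls. -/
def hausdorffContent (d : ℕ) (α : ℝ) (ω : Set (EuclideanSpace ℝ (Fin d))) : ℝ≥0∞ :=
  ⨅ (c : ℕ → EuclideanSpace ℝ (Fin d)) (r : ℕ → ℝ) (_ : ∀ j, 0 < r j)
    (_ : ω ⊆ ⋃ j, Metric.closedBall (c j) (r j)), ∑' j, ENNReal.ofReal (r j ^ α)

/-- The Laplacian. -/
def laplacian (d : ℕ) (f : EuclideanSpace ℝ (Fin d) → ℝ) (x : EuclideanSpace ℝ (Fin d)) : ℝ :=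
  ∑ i : Fin d, iteratedFDeriv ℝ 2 f x ![EuclideanSpace.single i 1, EuclideanSpace.single i 1]

/-- Fractional maximal function of order `a`. -/
def fracMaximal (d : ℕ) (a : ℝ) (f : EuclideanSpace ℝ (Fin d) → ℝ)
    (x : EuclideanSpace ℝ (Fin d)) : ℝ≥0∞ :=
  ⨆ (r : ℝ) (_ : 0 < r), ENNReal.ofReal (r ^ (a - (d : ℝ))) *
    ∫⁻ y in Metric.closedBall x r, ENNReal.ofReal |f y|

/-- BMO seminorm (as an extended real). -/
def bmoNorm (d : ℕ) (g : EuclideanSpace ℝ (Fin d) → ℝ) : ℝ≥0∞ :=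
  ⨆ (x : EuclideanSpace ℝ (Fin d)) (r : ℝ) (_ : 0 < r),
    ENNReal.ofReal (⨍ y in Metric.ball x r, |g y - ⨍ z in Metric.ball x r, g z|)

/-!
Writing `‖ξ‖ = c⁻¹ ∫₀^∞ (1 - exp (-(‖ξ‖ / v)²)) dv` turns `(-Δ)^{1/2} f (x)` into an integral over
`v` of `f x` minus the Gaussian average of `f` around `x` at scale `1 / v`. If `f` vanishes on the
ball of radius `ρ` about `x`, only the Gaussian tail survives: it is at most a multiple of
`v ^ n * exp (-(π v ρ)²) * ‖f‖₁`, whose integral over `v` is of order `ρ ^ (-n - 1)`. Far from the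
support `ρ` is comparable to `1 + ‖x‖`, while on bounded sets the `L¹` norm of `‖ξ‖ • 𝓕 f ξ` is
bound enough. Dilations cost nothing because the symbol is homogeneous of degree one.
-/

open Module (finrank)
open scoped RealInnerProductSpace ContDiff

section Subordination

lemma one_sub_exp_neg_le {u : ℝ} (hu : 0 ≤ u) : 1 - exp (-u) ≤ 2 * u / (1 + u) := by
  rw [le_div_iff₀ (by positivity)]
  nlinarith [add_one_le_exp (-u), exp_pos (-u)]

lemma one_sub_exp_neg_sq_nonneg (u : ℝ) : 0 ≤ 1 - exp (-u ^ 2) :=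
  sub_nonneg.2 (exp_le_one_iff.2 (neg_nonpos.2 (sq_nonneg u)))

lemma integrableOn_one_sub_exp_neg_inv_sq :
    IntegrableOn (fun v : ℝ ↦ 1 - exp (-v⁻¹ ^ 2)) (Ioi 0) := by
  refine Integrable.mono' (integrable_inv_one_add_sq.const_mul 2).integrableOn
    (Measurable.aestronglyMeasurable (by fun_prop)) ?_
  filter_upwards [ae_restrict_mem measurableSet_Ioi] with v (hv : 0 < v)
  rw [norm_of_nonneg (one_sub_exp_neg_sq_nonneg _)]
  calc 1 - exp (-v⁻¹ ^ 2) ≤ 2 * v⁻¹ ^ 2 / (1 + v⁻¹ ^ 2) := one_sub_exp_neg_le (sq_nonneg _)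
    _ = 2 * (1 + v ^ 2)⁻¹ := by field_simp; ring

/-- The constant `c` in the subordination identity `∫₀^∞ (1 - exp (-(r / v)²)) dv = c r`, which
writes the symbol `r = |ξ|` of `(-Δ)^{1/2}` as a superposition of Gaussian symbols. -/
def subordinationConst : ℝ := ∫ v in Ioi (0 : ℝ), (1 - exp (-v⁻¹ ^ 2))

lemma subordinationConst_pos : 0 < subordinationConst := by
  rw [subordinationConst, setIntegral_pos_iff_support_of_nonneg_ae
    (.of_forall fun v ↦ one_sub_exp_neg_sq_nonneg v⁻¹) integrableOn_one_sub_exp_neg_inv_sq]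
  have hsupp : Ioi 0 ⊆ Function.support fun v : ℝ ↦ 1 - exp (-v⁻¹ ^ 2) := fun v (hv : 0 < v) ↦
    (sub_pos.2 (exp_lt_one_iff.2 (neg_lt_zero.2 (by positivity)))).ne'
  rw [inter_eq_right.2 hsupp, volume_Ioi]
  exact ENNReal.coe_lt_top

lemma div_eq_inv_inv_mul {α : Type*} [DivisionCommMonoid α] (a b : α) :
    a / b = (a⁻¹ * b)⁻¹ := by
  rw [mul_inv, inv_inv, div_eq_mul_inv]

lemma integrableOn_one_sub_exp_neg_div_sq {r : ℝ} (hr : 0 ≤ r) :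
    IntegrableOn (fun v : ℝ ↦ 1 - exp (-(r / v) ^ 2)) (Ioi 0) := by
  rcases hr.eq_or_lt with rfl | hr
  · simp
  · simp_rw [div_eq_inv_inv_mul r]
    rw [integrableOn_Ioi_comp_mul_left_iff (fun v : ℝ ↦ 1 - exp (-v⁻¹ ^ 2)) 0 (inv_pos.2 hr),
      mul_zero]
    exact integrableOn_one_sub_exp_neg_inv_sq

lemma integral_one_sub_exp_neg_div_sq {r : ℝ} (hr : 0 ≤ r) :
    ∫ v in Ioi (0 : ℝ), (1 - exp (-(r / v) ^ 2)) = subordinationConst * r := by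
  rcases hr.eq_or_lt with rfl | hr
  · simp
  · simp_rw [div_eq_inv_inv_mul r]
    rw [integral_comp_mul_left_Ioi (fun v : ℝ ↦ 1 - exp (-v⁻¹ ^ 2)) 0 (inv_pos.2 hr), mul_zero,
      inv_inv, smul_eq_mul, mul_comm, subordinationConst]

variable {E F : Type*} [NormedAddCommGroup E] [MeasurableSpace E] [OpensMeasurableSpace E]
  [NormedAddCommGroup F] [NormedSpace ℝ F] {μ : Measure E} {g : E → F}

lemma integrable_prod_one_sub_gaussian_smul [SFinite μ] (hg : AEStronglyMeasurable g μ)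
    (hint : Integrable (fun ξ ↦ ‖ξ‖ • g ξ) μ) :
    Integrable (fun p : E × ℝ ↦ (1 - exp (-(‖p.1‖ / p.2) ^ 2)) • g p.1)
      (μ.prod (volume.restrict (Ioi 0))) := by
  have hmeas : AEStronglyMeasurable (fun p : E × ℝ ↦ (1 - exp (-(‖p.1‖ / p.2) ^ 2)) • g p.1)
      (μ.prod (volume.restrict (Ioi 0))) :=
    (Measurable.aestronglyMeasurable (by fun_prop)).smul hg.comp_fst
  refine (integrable_prod_iff hmeas).2 ⟨.of_forall fun ξ ↦
    (integrableOn_one_sub_exp_neg_div_sq (norm_nonneg ξ)).smul_const (g ξ), ?_⟩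
  simp_rw [norm_smul, norm_of_nonneg (one_sub_exp_neg_sq_nonneg _), integral_mul_const,
    integral_one_sub_exp_neg_div_sq (norm_nonneg _), mul_assoc]
  simpa only [norm_smul, norm_norm] using hint.norm.const_mul subordinationConst

lemma integral_one_sub_gaussian_smul [SFinite μ] [CompleteSpace F] (hg : AEStronglyMeasurable g μ)
    (hint : Integrable (fun ξ ↦ ‖ξ‖ • g ξ) μ) :
    ∫ v in Ioi (0 : ℝ), ∫ ξ, (1 - exp (-(‖ξ‖ / v) ^ 2)) • g ξ ∂μ =
      subordinationConst • ∫ ξ, ‖ξ‖ • g ξ ∂μ := by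
  rw [← integral_integral_swap (integrable_prod_one_sub_gaussian_smul hg hint), ← integral_smul]
  simp_rw [integral_smul_const, integral_one_sub_exp_neg_div_sq (norm_nonneg _), mul_smul]

end Subordination

lemma integrableOn_pow_mul_exp_neg_sq (m : ℕ) {b : ℝ} (hb : 0 < b) :
    IntegrableOn (fun v : ℝ ↦ v ^ m * exp (-(b * v) ^ 2)) (Ioi 0) := by
  simpa [mul_pow] using integrableOn_rpow_mul_exp_neg_mul_sq (pow_pos hb 2)
    (neg_one_lt_zero.trans_le m.cast_nonneg)

lemma integral_pow_mul_exp_neg_sq (m : ℕ) {b : ℝ} (hb : 0 < b) :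
    ∫ v in Ioi (0 : ℝ), v ^ m * exp (-(b * v) ^ 2) =
      b ^ (-(m : ℝ) - 1) * (Gamma ((m + 1) / 2) / 2) := by
  have h := integral_rpow_mul_exp_neg_mul_rpow two_pos
    (neg_one_lt_zero.trans_le (m.cast_nonneg (α := ℝ))) (pow_pos hb 2)
  have hexp : (2 : ℕ) * (-(m + 1 : ℝ) / 2) = -(m : ℝ) - 1 := by
    push_cast
    ring
  simp only [rpow_natCast, rpow_two, ← rpow_natCast_mul hb.le, hexp] at h
  simp_rw [mul_pow, ← neg_mul, h]
  ring

lemma exists_norm_le_mul_one_add_norm_rpow {E F : Type*} [SeminormedAddCommGroup E]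
    [SeminormedAddCommGroup F] {g : E → F} {A M R s : ℝ} (hs : s ≤ 0) (hM : ∀ x, ‖g x‖ ≤ M)
    (hA : ∀ x, R ≤ ‖x‖ → ‖g x‖ ≤ A * (1 + ‖x‖) ^ s) :
    ∃ C : ℝ, 0 < C ∧ ∀ x, ‖g x‖ ≤ C * (1 + ‖x‖) ^ s := by
  refine ⟨max 1 (max A (M / (1 + R) ^ s)), by positivity, fun x ↦ ?_⟩
  rcases le_total R ‖x‖ with hx | hx
  · refine (hA x hx).trans ?_
    gcongr
    exact (le_max_left _ _).trans (le_max_right _ _)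
  · have hR : 0 ≤ R := (norm_nonneg x).trans hx
    calc ‖g x‖ ≤ M := hM x
      _ = M / (1 + R) ^ s * (1 + R) ^ s := (div_mul_cancel₀ _ (by positivity)).symm
      _ ≤ max 1 (max A (M / (1 + R) ^ s)) * (1 + ‖x‖) ^ s := by
        gcongr ?_ * ?_
        · exact (le_max_right _ _).trans (le_max_right _ _)
        · exact rpow_le_rpow_of_nonpos (by positivity) (by linarith) hs

section GaussianKernel

variable {E : Type*} [NormedAddCommGroup E] [InnerProductSpace ℝ E]

/-- The Gaussian with Fourier transform `exp (-(‖ξ‖ / v)²)`. Its width is of order `1 / v`. -/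
def gaussianKernel (v : ℝ) (z : E) : ℝ := (√π * v) ^ finrank ℝ E * exp (-(π * v * ‖z‖) ^ 2)

lemma gaussianKernel_nonneg {v : ℝ} (hv : 0 ≤ v) (z : E) : 0 ≤ gaussianKernel v z := by
  unfold gaussianKernel
  positivity

lemma gaussianKernel_le_of_le_norm {v ρ : ℝ} (hv : 0 ≤ v) (hρ : 0 ≤ ρ) {z : E} (hz : ρ ≤ ‖z‖) :
    gaussianKernel v z ≤ (√π * v) ^ finrank ℝ E * exp (-(π * v * ρ) ^ 2) := by
  unfold gaussianKernel
  gcongr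

lemma fourier_modulated_gaussian [FiniteDimensional ℝ E] [MeasurableSpace E] [BorelSpace E]
    {v : ℝ} (hv : 0 < v) (x y : E) :
    𝓕 (fun ξ : E ↦ Complex.exp (-((v ^ 2)⁻¹ : ℝ) * ‖ξ‖ ^ 2 + 2 * π * Complex.I * ⟪x, ξ⟫)) y =
      (gaussianKernel v (x - y) : ℂ) := by
  have hb : 0 < (((v ^ 2)⁻¹ : ℝ) : ℂ).re := by
    rw [Complex.ofReal_re]
    positivity
  have hpow : (π * v ^ 2) ^ ((finrank ℝ E : ℝ) / 2) = (√π * v) ^ finrank ℝ E := by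
    rw [rpow_div_two_eq_sqrt _ (by positivity), sqrt_mul pi_pos.le, sqrt_sq hv.le, rpow_natCast]
  rw [fourier_gaussian_innerProductSpace' hb, gaussianKernel, ← hpow]
  push_cast [Complex.ofReal_cpow (show 0 ≤ π * v ^ 2 by positivity)]
  congr 2
  · rw [div_inv_eq_mul]
  · rw [div_inv_eq_mul]
    ring

end GaussianKernel

section SqrtNegLaplacian

variable {E F : Type*} [NormedAddCommGroup E] [InnerProductSpace ℝ E] [FiniteDimensional ℝ E]
  [MeasurableSpace E] [BorelSpace E] [NormedAddCommGroup F] [NormedSpace ℂ F]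

/-- The operator `(-Δ)^{1/2}` on functions with values in a complex normed space: the Fourier
multiplier with symbol `‖ξ‖` (without the factor `2π`, as in `halfLaplacian`). -/
def sqrtNegLaplacian (f : E → F) : E → F := 𝓕⁻ fun ξ ↦ ‖ξ‖ • 𝓕 f ξ

/-- The `L¹`-normalized dilation `φ_t(x) = t^{-n} φ(x / t)` on an `n`-dimensional space. -/
def l1Dilation (t : ℝ) (f : E → F) (y : E) : F := t ^ (-(finrank ℝ E : ℝ)) • f (t⁻¹ • y)

lemma fourier_l1Dilation {t : ℝ} (ht : 0 < t) (f : E → F) (ξ : E) :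
    𝓕 (l1Dilation t f) ξ = 𝓕 f (t • ξ) := by
  have hinner (y : E) : ⟪t⁻¹ • y, t • ξ⟫ = ⟪y, ξ⟫ := by
    rw [real_inner_smul_left, real_inner_smul_right, inv_mul_cancel_left₀ ht.ne']
  have hscale := Measure.integral_comp_inv_smul_of_nonneg volume
    (fun y : E ↦ 𝐞 (-⟪y, t • ξ⟫) • f y) ht.le
  simp_rw [hinner] at hscale
  simp_rw [fourier_eq, l1Dilation, smul_comm (𝐞 _)]
  rw [integral_smul, hscale, smul_smul, rpow_neg ht.le, rpow_natCast,
    inv_mul_cancel₀ (by positivity), one_smul]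

lemma fourierInv_comp_smul {t : ℝ} (ht : 0 < t) (g : E → F) (x : E) :
    𝓕⁻ (fun ξ ↦ g (t • ξ)) x = l1Dilation t (𝓕⁻ g) x := by
  have hinner (ξ : E) : ⟪t • ξ, t⁻¹ • x⟫ = ⟪ξ, x⟫ := by
    rw [real_inner_smul_left, real_inner_smul_right, mul_inv_cancel_left₀ ht.ne']
  have hscale := Measure.integral_comp_smul_of_nonneg volume
    (fun ξ : E ↦ 𝐞 ⟪ξ, t⁻¹ • x⟫ • g ξ) t (hR := ht.le)
  simp_rw [hinner] at hscale
  rw [l1Dilation, fourierInv_eq, fourierInv_eq, hscale, rpow_neg ht.le, rpow_natCast]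

lemma sqrtNegLaplacian_l1Dilation {t : ℝ} (ht : 0 < t) (f : E → F) (x : E) :
    sqrtNegLaplacian (l1Dilation t f) x = t⁻¹ • l1Dilation t (sqrtNegLaplacian f) x := by
  have hsymbol (ξ : E) : ‖ξ‖ • 𝓕 f (t • ξ) = t⁻¹ • ‖t • ξ‖ • 𝓕 f (t • ξ) := by
    rw [smul_smul, norm_smul, norm_of_nonneg ht.le, inv_mul_cancel_left₀ ht.ne']
  unfold sqrtNegLaplacian
  rw [← fourierInv_comp_smul ht]
  simp_rw [fourier_l1Dilation ht, hsymbol, fourierInv_eq, smul_comm (𝐞 _), integral_smul]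

lemma norm_fourierInv_le_integral_norm (g : E → F) (x : E) : ‖𝓕⁻ g x‖ ≤ ∫ ξ, ‖g ξ‖ :=
  VectorFourier.norm_fourierIntegral_le_integral_norm _ _ _ g x

lemma integrable_fourier_of_integrable_norm_smul {f : E → F} (hf : Integrable f)
    (hint : Integrable fun ξ ↦ ‖ξ‖ • 𝓕 f ξ) : Integrable (𝓕 f) := by
  have hcont : Continuous (𝓕 f) :=
    VectorFourier.fourierIntegral_continuous continuous_fourierChar continuous_inner hf
  refine hcont.locallyIntegrable.integrable_of_isBigO_cocompact ?_ (hint.integrableAtFilter _)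
  refine .of_bound 1 ?_
  filter_upwards [tendsto_norm_cocompact_atTop.eventually_ge_atTop 1] with ξ hξ
  rw [norm_smul, norm_norm, one_mul]
  exact le_mul_of_one_le_left (norm_nonneg _) hξ

variable [CompleteSpace F]

lemma fourierInv_gaussian_smul_fourier {f : E → F} (hf : Integrable f) {v : ℝ} (hv : 0 < v)
    (x : E) :
    𝓕⁻ (fun ξ ↦ exp (-(‖ξ‖ / v) ^ 2) • 𝓕 f ξ) x = ∫ y, gaussianKernel v (x - y) • f y := by
  have hg : Integrable fun ξ : E ↦
      Complex.exp (-((v ^ 2)⁻¹ : ℝ) * ‖ξ‖ ^ 2 + 2 * π * Complex.I * ⟪x, ξ⟫) :=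
    GaussianFourier.integrable_cexp_neg_mul_sq_norm_add
      (by rw [Complex.ofReal_re]; positivity) _ _
  have hflip : ∫ y, 𝓕 (fun ξ : E ↦
        Complex.exp (-((v ^ 2)⁻¹ : ℝ) * ‖ξ‖ ^ 2 + 2 * π * Complex.I * ⟪x, ξ⟫)) y • f y =
      ∫ ξ, Complex.exp (-((v ^ 2)⁻¹ : ℝ) * ‖ξ‖ ^ 2 + 2 * π * Complex.I * ⟪x, ξ⟫) • 𝓕 f ξ := by
    simpa using! VectorFourier.integral_fourierIntegral_smul_eq_flip (L := innerₗ E)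
      continuous_fourierChar continuous_inner hg hf
  simp_rw [fourier_modulated_gaussian hv, Complex.coe_smul] at hflip
  rw [hflip, fourierInv_eq']
  congr with ξ
  rw [← Complex.coe_smul, smul_smul, Complex.ofReal_exp, ← Complex.exp_add, real_inner_comm]
  congr 2
  push_cast
  field_simp
  ring

lemma fourierInv_one_sub_gaussian_smul_fourier {f : E → F} (hf : Integrable f)
    (hFf : Integrable (𝓕 f)) {v : ℝ} (hv : 0 < v) {x : E} (hx : ContinuousAt f x) :
    𝓕⁻ (fun ξ ↦ (1 - exp (-(‖ξ‖ / v) ^ 2)) • 𝓕 f ξ) x =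
      f x - ∫ y, gaussianKernel v (x - y) • f y := by
  have hGf : Integrable fun ξ ↦ exp (-(‖ξ‖ / v) ^ 2) • 𝓕 f ξ := by
    refine hFf.bdd_smul (𝕜 := ℝ) 1 (Continuous.aestronglyMeasurable (by fun_prop))
      (.of_forall fun ξ ↦ ?_)
    rw [norm_of_nonneg (exp_pos _).le, exp_le_one_iff]
    exact neg_nonpos.2 (sq_nonneg _)
  rw [← hf.fourierInv_fourier_eq hFf hx, ← fourierInv_gaussian_smul_fourier hf hv]
  simp_rw [fourierInv_eq, sub_smul, one_smul, smul_sub]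
  refine integral_sub ?_ ?_
  · simpa using (fourierIntegral_convergent_iff (-x)).2 hFf
  · simpa using (fourierIntegral_convergent_iff (-x)).2 hGf

lemma integral_fourierInv_one_sub_gaussian_smul {g : E → F} (hg : AEStronglyMeasurable g)
    (hint : Integrable fun ξ ↦ ‖ξ‖ • g ξ) (x : E) :
    ∫ v in Ioi (0 : ℝ), 𝓕⁻ (fun ξ ↦ (1 - exp (-(‖ξ‖ / v) ^ 2)) • g ξ) x =
      subordinationConst • 𝓕⁻ (fun ξ ↦ ‖ξ‖ • g ξ) x := by
  have hphase : AEStronglyMeasurable fun ξ ↦ 𝐞 ⟪ξ, x⟫ • g ξ :=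
    (Continuous.aestronglyMeasurable (by fun_prop)).smul hg
  have hint' := (fourierIntegral_convergent_iff (-x)).2 hint
  simp only [inner_neg_right, neg_neg] at hint'
  simp_rw [fourierInv_eq, smul_comm (𝐞 _)] at hint' ⊢
  exact integral_one_sub_gaussian_smul hphase hint'

lemma norm_fourierInv_one_sub_gaussian_smul_fourier_le {f : E → F} (hf : Integrable f)
    (hFf : Integrable (𝓕 f)) {v ρ : ℝ} (hv : 0 < v) (hρ : 0 < ρ) {x : E}
    (hfx : ∀ y ∈ ball x ρ, f y = 0) :
    ‖𝓕⁻ (fun ξ ↦ (1 - exp (-(‖ξ‖ / v) ^ 2)) • 𝓕 f ξ) x‖ ≤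
      (√π * v) ^ finrank ℝ E * exp (-(π * v * ρ) ^ 2) * ∫ y, ‖f y‖ := by
  have hcont : ContinuousAt f x := continuousAt_const.congr <|
    Filter.eventually_of_mem (ball_mem_nhds x hρ) fun y hy ↦ (hfx y hy).symm
  rw [fourierInv_one_sub_gaussian_smul_fourier hf hFf hv hcont, hfx x (mem_ball_self hρ), zero_sub,
    norm_neg, ← integral_const_mul]
  refine norm_integral_le_of_norm_le (hf.norm.const_mul _) (.of_forall fun y ↦ ?_)
  by_cases hy : y ∈ ball x ρ
  · simp [hfx y hy]
  · rw [mem_ball', not_lt, dist_eq_norm] at hy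
    rw [norm_smul, norm_of_nonneg (gaussianKernel_nonneg hv.le _)]
    gcongr
    exact gaussianKernel_le_of_le_norm hv.le hρ.le hy

lemma norm_sqrtNegLaplacian_le_of_eqOn_ball_zero {f : E → F} (hf : Integrable f)
    (hint : Integrable fun ξ ↦ ‖ξ‖ • 𝓕 f ξ) {ρ : ℝ} (hρ : 0 < ρ) {x : E}
    (hfx : ∀ y ∈ ball x ρ, f y = 0) :
    ‖sqrtNegLaplacian f x‖ ≤
      √π ^ finrank ℝ E * (∫ y, ‖f y‖) * (Gamma ((finrank ℝ E + 1) / 2) / 2) /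
        subordinationConst * (π * ρ) ^ (-(finrank ℝ E : ℝ) - 1) := by
  have hFf := integrable_fourier_of_integrable_norm_smul hf hint
  rw [div_mul_eq_mul_div, le_div_iff₀' subordinationConst_pos]
  calc subordinationConst * ‖sqrtNegLaplacian f x‖
      = ‖∫ v in Ioi (0 : ℝ), 𝓕⁻ (fun ξ ↦ (1 - exp (-(‖ξ‖ / v) ^ 2)) • 𝓕 f ξ) x‖ := by
        rw [integral_fourierInv_one_sub_gaussian_smul hFf.aestronglyMeasurable hint, norm_smul,
          norm_of_nonneg subordinationConst_pos.le, sqrtNegLaplacian]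
    _ ≤ ∫ v in Ioi (0 : ℝ), √π ^ finrank ℝ E * (∫ y, ‖f y‖) *
          (v ^ finrank ℝ E * exp (-(π * ρ * v) ^ 2)) := by
        refine norm_integral_le_of_norm_le
          ((integrableOn_pow_mul_exp_neg_sq _ (by positivity)).const_mul _) ?_
        filter_upwards [ae_restrict_mem measurableSet_Ioi] with v (hv : 0 < v)
        refine (norm_fourierInv_one_sub_gaussian_smul_fourier_le hf hFf hv hρ hfx).trans_eq ?_
        rw [mul_pow, mul_right_comm π]
        ring
    _ = √π ^ finrank ℝ E * (∫ y, ‖f y‖) * (Gamma ((finrank ℝ E + 1) / 2) / 2) *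
          (π * ρ) ^ (-(finrank ℝ E : ℝ) - 1) := by
        rw [integral_const_mul, integral_pow_mul_exp_neg_sq _ (by positivity)]
        ring

lemma exists_norm_sqrtNegLaplacian_le {f : E → F} (hf : Integrable f) (hsupp : HasCompactSupport f)
    (hint : Integrable fun ξ ↦ ‖ξ‖ • 𝓕 f ξ) :
    ∃ C : ℝ, 0 < C ∧ ∀ x : E,
      ‖sqrtNegLaplacian f x‖ ≤ C * (1 + ‖x‖) ^ (-(finrank ℝ E : ℝ) - 1) := by
  obtain ⟨R, hR⟩ := hsupp.isCompact.isBounded.subset_closedBall 0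
  have hvanish (x : E) (hx : 2 * R + 1 ≤ ‖x‖) : ∀ y ∈ ball x ((1 + ‖x‖) / 4), f y = 0 := by
    intro y hy
    by_contra hfy
    have hyR : ‖y‖ ≤ R := mem_closedBall_zero_iff.1 (hR (subset_tsupport f hfy))
    rw [mem_ball', dist_eq_norm] at hy
    linarith [norm_sub_norm_le x y, norm_nonneg y]
  refine exists_norm_le_mul_one_add_norm_rpow (R := 2 * R + 1)
    (A := √π ^ finrank ℝ E * (∫ y, ‖f y‖) * (Gamma ((finrank ℝ E + 1) / 2) / 2) /
      subordinationConst * (π / 4) ^ (-(finrank ℝ E : ℝ) - 1))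
    (by linarith [(finrank ℝ E).cast_nonneg (α := ℝ)])
    (norm_fourierInv_le_integral_norm _) fun x hx ↦ ?_
  have hρ : π / 4 * (1 + ‖x‖) = π * ((1 + ‖x‖) / 4) := by ring
  rw [mul_assoc, ← mul_rpow (by positivity) (by positivity), hρ]
  exact norm_sqrtNegLaplacian_le_of_eqOn_ball_zero hf hint (by positivity) (hvanish x hx)

theorem halfLaplacian_dilation_decay_general {f : E → F} (hf : Integrable f)
    (hsupp : HasCompactSupport f) (hint : Integrable fun ξ ↦ ‖ξ‖ • 𝓕 f ξ) :
    ∃ C : ℝ, 0 < C ∧ ∀ t : ℝ, 0 < t → ∀ x : E,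
      ‖sqrtNegLaplacian (l1Dilation t f) x‖ ≤ C * (t + ‖x‖) ^ (-(finrank ℝ E : ℝ) - 1) := by
  obtain ⟨C, hC, hdecay⟩ := exists_norm_sqrtNegLaplacian_le hf hsupp hint
  refine ⟨C, hC, fun t ht x ↦ ?_⟩
  have hsum : t + ‖x‖ = t * (1 + ‖t⁻¹ • x‖) := by
    rw [norm_smul, norm_inv, norm_of_nonneg ht.le]
    field_simp
  calc ‖sqrtNegLaplacian (l1Dilation t f) x‖
      = t ^ (-(finrank ℝ E : ℝ) - 1) * ‖sqrtNegLaplacian f (t⁻¹ • x)‖ := by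
        rw [sqrtNegLaplacian_l1Dilation ht, l1Dilation, smul_smul, norm_smul,
          norm_of_nonneg (by positivity), mul_comm t⁻¹, ← div_eq_mul_inv, ← rpow_sub_one ht.ne']
    _ ≤ t ^ (-(finrank ℝ E : ℝ) - 1) * (C * (1 + ‖t⁻¹ • x‖) ^ (-(finrank ℝ E : ℝ) - 1)) := by
        gcongr
        exact hdecay _
    _ = C * (t + ‖x‖) ^ (-(finrank ℝ E : ℝ) - 1) := by
        rw [hsum, mul_rpow ht.le (by positivity)]
        ring

end SqrtNegLaplacian

lemma integrable_norm_smul_fourier {E F : Type*} [NormedAddCommGroup E] [InnerProductSpace ℝ E]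
    [FiniteDimensional ℝ E] [MeasurableSpace E] [BorelSpace E] [NormedAddCommGroup F]
    [NormedSpace ℂ F] {f : E → F} (hf : ContDiff ℝ ∞ f) (hsupp : HasCompactSupport f) :
    Integrable fun ξ ↦ ‖ξ‖ • 𝓕 f ξ := by
  have hcont : Continuous (𝓕 f) := (𝓕 (hsupp.toSchwartzMap hf)).continuous
  have hmoment : Integrable fun ξ ↦ ‖ξ‖ ^ 1 * ‖𝓕 f ξ‖ :=
    (𝓕 (hsupp.toSchwartzMap hf)).integrable_pow_mul volume 1
  rw [← integrable_norm_iff (by fun_prop)]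
  simpa only [norm_smul, norm_norm, pow_one] using hmoment

lemma abs_halfLaplacian_le {d : ℕ} (φ : EuclideanSpace ℝ (Fin d) → ℝ)
    (x : EuclideanSpace ℝ (Fin d)) :
    |halfLaplacian d φ x| ≤ ‖sqrtNegLaplacian (fun y ↦ (φ y : ℂ)) x‖ :=
  Complex.abs_re_le_norm _

lemma ofReal_dilation {d : ℕ} (φ : EuclideanSpace ℝ (Fin d) → ℝ) (t : ℝ) :
    (fun y ↦ ((t ^ (-(d : ℝ)) * φ (t⁻¹ • y) : ℝ) : ℂ)) = l1Dilation t fun y ↦ (φ y : ℂ) := by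
  ext y
  rw [l1Dilation, finrank_euclideanSpace_fin, Complex.real_smul, Complex.ofReal_mul]

/-- uniform decay for dilations `φ_t(x) = t^{-d} φ(x/t)`. -/
theorem halfLaplacian_dilation_decay (d : ℕ) (hd : 2 ≤ d) (φ : EuclideanSpace ℝ (Fin d) → ℝ)
    (hφ : ContDiff ℝ (⊤ : ℕ∞) φ) (hsupp : HasCompactSupport φ) :
    ∃ C : ℝ, 0 < C ∧ ∀ t : ℝ, 0 < t → ∀ x : EuclideanSpace ℝ (Fin d),
      |halfLaplacian d (fun y => t ^ (-(d : ℝ)) * φ (t⁻¹ • y)) x| ≤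
        C * (t + ‖x‖) ^ (-(d : ℝ) - 1) := by
  have hf : ContDiff ℝ ∞ fun y ↦ (φ y : ℂ) := Complex.ofRealCLM.contDiff.comp hφ
  have hfsupp : HasCompactSupport fun y ↦ (φ y : ℂ) := hsupp.comp_left Complex.ofReal_zero
  obtain ⟨C, hC, hdecay⟩ := halfLaplacian_dilation_decay_general
    (hf.continuous.integrable_of_hasCompactSupport hfsupp) hfsupp
    (integrable_norm_smul_fourier hf hfsupp)
  refine ⟨C, hC, fun t ht x ↦ (abs_halfLaplacian_le _ x).trans ?_⟩
  simpa only [ofReal_dilation, finrank_euclideanSpace_fin] using hdecay t ht x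
end
end

section
/- Let d ≥ 2 and f ∈ C_0^∞(ℝ^d) be real-valued. Then ∫_0^∞ H^{d-1}_∞({x : f(x) > t}) dt ≤ C ‖∇f‖_{L^1(ℝ^d)}, with C depending only on d. -/
open MeasureTheory Real Metric Set
open scoped FourierTransform ENNReal
noncomputable section

/-!
The perimeter of `E` is replaced by a finite-difference quantity: the mass that leaves `E` under
translation by `ε k`, divided by `ε` and integrated over the directions `k` in a ball.

For superlevel sets of `f`, the layer-cake formula turns the integral over all levels of the mass
leaving `{f > t}` under translation by `h` into the integral of the positive part of
`f x - f (x + h)`, which is at most `‖h‖ ‖∇f‖_{L¹}`. This takes the place of Sard's theorem and the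
coarea formula.

For the boxing inequality, cover an open set `E` of finite volume by the maximal dyadic cubes in
which its density exceeds `2^{-(d+1)}`. These are disjoint, and their density is at most `1/2`
because their parents are sparse. On a convex cube `Q` of side `ℓ`, a translation taking a point of
`E ∩ Q` into `Q \ E` can be cut into `ℓ / ε` equal steps, one of which leaves `E` inside `Q`; this
gives the relative isoperimetric inequality `|E ∩ Q| |Q \ E| ≤ ℓ^{d+1} P_ε(E; Q)`, so the perimeter
inside a stopping cube controls `ℓ^{d-1}`. Fatou's lemma for `ε → 0` then combines the two bounds.
-/

section HausdorffContent

-- The definition asks for infinitely many balls, so a finite family is padded with tiny ones.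
lemma hausdorffContent_le_tsum {d : ℕ} {α : ℝ} (hα : 0 < α) {ι : Type*} [Countable ι]
    {ω : Set (EuclideanSpace ℝ (Fin d))} {c : ι → EuclideanSpace ℝ (Fin d)} {r : ι → ℝ}
    (hr : ∀ i, 0 < r i) (hω : ω ⊆ ⋃ i, closedBall (c i) (r i)) :
    hausdorffContent d α ω ≤ ∑' i, ENNReal.ofReal (r i ^ α) := by
  refine ENNReal.le_of_forall_pos_le_add fun ε hε _ => ?_
  obtain ⟨δ, hδ, hδε⟩ := ENNReal.exists_pos_sum_of_countable (ENNReal.coe_ne_zero.2 hε.ne') ℕ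
  obtain ⟨_⟩ := nonempty_denumerable (ι ⊕ ℕ)
  let e : ℕ ≃ ι ⊕ ℕ := (Denumerable.eqv (ι ⊕ ℕ)).symm
  let center : ι ⊕ ℕ → EuclideanSpace ℝ (Fin d) := Sum.elim c 0
  let radius : ι ⊕ ℕ → ℝ := Sum.elim r fun j => (δ j : ℝ) ^ α⁻¹
  have radius_pos : ∀ i, 0 < radius i :=
    Sum.rec hr fun j => Real.rpow_pos_of_pos (NNReal.coe_pos.2 (hδ j)) _
  have cover : ω ⊆ ⋃ j, closedBall (center (e j)) (radius (e j)) := fun x hx => by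
    obtain ⟨i, hi⟩ := mem_iUnion.1 (hω hx)
    exact mem_iUnion.2 ⟨e.symm (.inl i), by simpa [center, radius] using hi⟩
  calc hausdorffContent d α ω
      ≤ ∑' j, ENNReal.ofReal (radius (e j) ^ α) :=
        iInf₂_le_of_le (center ∘ e) (radius ∘ e) (iInf₂_le (fun j => radius_pos (e j)) cover)
    _ = ∑' i, ENNReal.ofReal (radius i ^ α) := e.tsum_eq fun i => ENNReal.ofReal (radius i ^ α)
    _ = ∑' i, ENNReal.ofReal (r i ^ α) + ∑' j, (δ j : ℝ≥0∞) := by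
        rw [Summable.tsum_sum ENNReal.summable ENNReal.summable]
        simp [radius, Real.rpow_inv_rpow, hα.ne']
    _ ≤ ∑' i, ENNReal.ofReal (r i ^ α) + ε := by gcongr

end HausdorffContent

section NonlocalPerimeter

/-- The points of `E` that the translation by `h` moves out of `E`. -/
def exitSet {X : Type*} [Add X] (E : Set X) (h : X) : Set X :=
  {x ∈ E | x + h ∉ E}

lemma exists_add_nsmul_mem_exitSet {X : Type*} [AddCommGroup X] [Module ℝ X] {E Q : Set X}
    (hQ : Convex ℝ Q) {N : ℕ} {x h : X} (hx : x ∈ E ∩ Q) (hy : x + N • h ∈ Q \ E) :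
    ∃ i < N, x + i • h ∈ exitSet E h ∩ Q := by
  obtain ⟨i, hi, hstay, hexit⟩ : ∃ i < N, x + i • h ∈ E ∧ x + (i + 1) • h ∉ E := by
    by_contra! hstep
    have hstay : ∀ i ≤ N, x + i • h ∈ E :=
      Nat.rec (fun _ => by simpa using hx.1) fun i ih hi => hstep i hi (ih (by lia))
    exact hy.2 (hstay N le_rfl)
  refine ⟨i, hi, ⟨hstay, by rwa [add_assoc, ← succ_nsmul]⟩, ?_⟩
  have hN : (0 : ℝ) < N := mod_cast i.zero_le.trans_lt hi
  have hiN : (i : ℝ) / N ∈ Icc 0 1 := ⟨by positivity, (div_le_one hN).2 (mod_cast hi.le)⟩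
  simpa only [← Nat.cast_smul_eq_nsmul ℝ, smul_smul, div_mul_cancel₀ _ hN.ne'] using
    hQ.add_smul_mem hx.2 hy.1 hiN

lemma measure_add_nsmul_mem_diff_le {X : Type*} [AddCommGroup X] [Module ℝ X]
    [MeasurableSpace X] [MeasurableAdd X] (μ : Measure X) [μ.IsAddRightInvariant] {E Q : Set X}
    (hQ : Convex ℝ Q) (N : ℕ) (h : X) :
    μ {x ∈ E ∩ Q | x + N • h ∈ Q \ E} ≤ N * μ (exitSet E h ∩ Q) := by
  have hsub : {x ∈ E ∩ Q | x + N • h ∈ Q \ E} ⊆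
      ⋃ i ∈ Finset.range N, (· + i • h) ⁻¹' (exitSet E h ∩ Q) := fun x hx => by
    obtain ⟨i, hi, hexit⟩ := exists_add_nsmul_mem_exitSet hQ hx.1 hx.2
    exact mem_iUnion₂.2 ⟨i, Finset.mem_range.2 hi, hexit⟩
  calc μ {x ∈ E ∩ Q | x + N • h ∈ Q \ E}
      ≤ ∑ i ∈ Finset.range N, μ ((· + i • h) ⁻¹' (exitSet E h ∩ Q)) :=
        (measure_mono hsub).trans (measure_biUnion_finset_le _ _)
    _ = N * μ (exitSet E h ∩ Q) := by
        simp only [measure_preimage_add_right, Finset.sum_const, Finset.card_range, nsmul_eq_mul]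

lemma measurable_measure_exitSet_inter {X : Type*} [Add X] [MeasurableSpace X] [MeasurableAdd₂ X]
    (μ : Measure X) [SFinite μ] {E Q : Set X} (hE : MeasurableSet E) (hQ : MeasurableSet Q) :
    Measurable fun h => μ (exitSet E h ∩ Q) :=
  measurable_measure_prodMk_left (s := {q : X × X | (q.2 ∈ E ∧ q.2 + q.1 ∉ E) ∧ q.2 ∈ Q}) <|
    ((measurable_snd hE).inter ((measurable_snd.add measurable_fst) hE.compl)).inter
      (measurable_snd hQ)

variable {X : Type*} [NormedAddCommGroup X] [NormedSpace ℝ X] [MeasurableSpace X]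

/-- A finite-difference substitute for the perimeter of `E` inside `Q`: the rate, integrated over
the directions `k` in the ball of radius `R`, at which translation by `ε • k` moves mass of `E ∩ Q`
out of `E`. -/
def nonlocalPerimeter (μ : Measure X) (R ε : ℝ) (E Q : Set X) : ℝ≥0∞ :=
  ENNReal.ofReal ε⁻¹ * ∫⁻ k in closedBall 0 R, μ (exitSet E (ε • k) ∩ Q) ∂μ

variable [BorelSpace X]

section FiniteDimensional

variable [FiniteDimensional ℝ X] (μ : Measure X) [μ.IsAddHaarMeasure]

lemma measure_mul_measure_eq_lintegral {A B : Set X} (hA : MeasurableSet A)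
    (hB : MeasurableSet B) {ℓ : ℝ} (hℓ : 0 < ℓ) :
    μ A * μ B = ENNReal.ofReal ℓ ^ Module.finrank ℝ X *
      ∫⁻ k, μ {x ∈ A | x + ℓ • k ∈ B} ∂μ := by
  let T : Set (X × X) := {q | q.1 ∈ A ∧ q.1 + ℓ • q.2 ∈ B}
  have hT : MeasurableSet T :=
    (measurable_fst hA).inter ((measurable_fst.add (measurable_snd.const_smul ℓ)) hB)
  have hslice (x : X) : A.indicator (fun _ => μ B) x =
      ENNReal.ofReal ℓ ^ Module.finrank ℝ X * μ (Prod.mk x ⁻¹' T) := by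
    by_cases hx : x ∈ A
    · have hpre : Prod.mk x ⁻¹' T = (ℓ • ·) ⁻¹' ((x + ·) ⁻¹' B) := by ext k; simp [T, hx]
      have hcancel : ENNReal.ofReal ℓ ^ Module.finrank ℝ X *
          ENNReal.ofReal |(ℓ ^ Module.finrank ℝ X)⁻¹| = 1 := by
        rw [← ENNReal.ofReal_pow hℓ.le, abs_of_pos (by positivity),
          ← ENNReal.ofReal_mul (by positivity), mul_inv_cancel₀ (by positivity),
          ENNReal.ofReal_one]
      simp only [hx, indicator_of_mem, hpre, Measure.addHaar_preimage_smul μ hℓ.ne',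
        measure_preimage_add, ← mul_assoc, hcancel, one_mul]
    · simp [T, hx]
  calc μ A * μ B
      = ENNReal.ofReal ℓ ^ Module.finrank ℝ X * ∫⁻ x, μ (Prod.mk x ⁻¹' T) ∂μ := by
        rw [mul_comm, ← lintegral_indicator_const hA, lintegral_congr hslice,
          lintegral_const_mul _ (measurable_measure_prodMk_left hT)]
    _ = ENNReal.ofReal ℓ ^ Module.finrank ℝ X * ∫⁻ k, μ ((·, k) ⁻¹' T) ∂μ := by
        rw [← Measure.prod_apply hT, ← Measure.prod_apply_symm hT]

lemma measure_inter_mul_measure_diff_le {E Q : Set X} (hE : MeasurableSet E)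
    (hQ : MeasurableSet Q) (hconv : Convex ℝ Q) {R ε ℓ : ℝ} {N : ℕ} (hℓ : 0 < ℓ)
    (hN : ℓ = N * ε) (hdiam : ∀ x ∈ Q, ∀ y ∈ Q, dist x y ≤ R * ℓ) :
    μ (E ∩ Q) * μ (Q \ E) ≤
      ENNReal.ofReal ℓ ^ (Module.finrank ℝ X + 1) * nonlocalPerimeter μ R ε E Q := by
  have hlarge (k : X) (hk : k ∉ closedBall 0 R) : {x ∈ E ∩ Q | x + ℓ • k ∈ Q \ E} = ∅ := by
    refine eq_empty_of_forall_notMem fun x hx => hk ?_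
    have hle := hdiam _ hx.2.1 _ hx.1.2
    rw [dist_self_add_left, norm_smul, Real.norm_of_nonneg hℓ.le, mul_comm] at hle
    exact mem_closedBall_zero_iff.2 (le_of_mul_le_mul_right hle hℓ)
  have hchain (k : X) : μ {x ∈ E ∩ Q | x + ℓ • k ∈ Q \ E} ≤
      (closedBall 0 R).indicator (fun k => N * μ (exitSet E (ε • k) ∩ Q)) k := by
    by_cases hk : k ∈ closedBall 0 R
    · simpa only [indicator_of_mem hk, hN, mul_smul, Nat.cast_smul_eq_nsmul] using
        measure_add_nsmul_mem_diff_le μ hconv N (ε • k)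
    · simp only [hlarge k hk, measure_empty, zero_le]
  have hscale : (N : ℝ≥0∞) = ENNReal.ofReal ℓ * ENNReal.ofReal ε⁻¹ := by
    have hε : ε ≠ 0 := by rintro rfl; simp [hN] at hℓ
    rw [← ENNReal.ofReal_mul hℓ.le, hN, mul_inv_cancel_right₀ hε, ENNReal.ofReal_natCast]
  calc μ (E ∩ Q) * μ (Q \ E)
      = ENNReal.ofReal ℓ ^ Module.finrank ℝ X *
          ∫⁻ k, μ {x ∈ E ∩ Q | x + ℓ • k ∈ Q \ E} ∂μ :=
        measure_mul_measure_eq_lintegral μ (hE.inter hQ) (hQ.diff hE) hℓ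
    _ ≤ ENNReal.ofReal ℓ ^ Module.finrank ℝ X *
          ∫⁻ k in closedBall 0 R, N * μ (exitSet E (ε • k) ∩ Q) ∂μ := by
        rw [← lintegral_indicator measurableSet_closedBall]
        gcongr with k
        exact hchain k
    _ = ENNReal.ofReal ℓ ^ (Module.finrank ℝ X + 1) * nonlocalPerimeter μ R ε E Q := by
        rw [lintegral_const_mul' _ _ (ENNReal.natCast_ne_top N), nonlocalPerimeter, hscale]
        ring

end FiniteDimensional

variable [SecondCountableTopology X] (μ : Measure X) [SFinite μ]

lemma sum_nonlocalPerimeter_le (R ε : ℝ) {E : Set X} (hE : MeasurableSet E) {ι : Type*}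
    (s : Finset ι) {Q : ι → Set X} (hQ : ∀ i, MeasurableSet (Q i))
    (hdisj : (s : Set ι).PairwiseDisjoint Q) :
    ∑ i ∈ s, nonlocalPerimeter μ R ε E (Q i) ≤ nonlocalPerimeter μ R ε E univ := by
  have hmeas (i : ι) : Measurable fun k => μ (exitSet E (ε • k) ∩ Q i) :=
    (measurable_measure_exitSet_inter μ hE (hQ i)).comp (measurable_const_smul ε)
  simp only [nonlocalPerimeter]
  rw [← Finset.mul_sum, ← lintegral_finsetSum _ fun i _ => hmeas i]
  gcongr with k
  calc ∑ i ∈ s, μ (exitSet E (ε • k) ∩ Q i)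
      ≤ ∑ i ∈ s, μ.restrict (exitSet E (ε • k)) (Q i) := by
        refine Finset.sum_le_sum fun i _ => ?_
        rw [Measure.restrict_apply (hQ i), inter_comm]
    _ = μ.restrict (exitSet E (ε • k)) (⋃ i ∈ s, Q i) :=
        (measure_biUnion_finset hdisj fun i _ => hQ i).symm
    _ ≤ μ.restrict (exitSet E (ε • k)) univ := measure_mono (subset_univ _)
    _ = μ (exitSet E (ε • k) ∩ univ) := by simp

end NonlocalPerimeter

section Coarea

section Superlevel

variable {X : Type*} [Add X] [MeasurableSpace X]

lemma measurable_measure_exitSet_superlevel [MeasurableAdd₂ X] (μ : Measure X) [SFinite μ]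
    {f : X → ℝ} (hf : Measurable f) {Y : Type*} [MeasurableSpace Y] {g : Y → X}
    (hg : Measurable g) : Measurable fun q : ℝ × Y => μ (exitSet {x | q.1 < f x} (g q.2)) :=
  measurable_measure_prodMk_left
    (s := {q : (ℝ × Y) × X | q.1.1 < f q.2 ∧ ¬ q.1.1 < f (q.2 + g q.1.2)}) <| by
    have hshift : Measurable fun q : (ℝ × Y) × X => f (q.2 + g q.1.2) :=
      hf.comp (measurable_snd.add (hg.comp (measurable_snd.comp measurable_fst)))
    have hlevel : Measurable fun q : (ℝ × Y) × X => q.1.1 := measurable_fst.comp measurable_fst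
    exact (measurableSet_lt hlevel (hf.comp measurable_snd)).inter
      (measurableSet_lt hlevel hshift).compl

lemma lintegral_measure_exitSet_superlevel [MeasurableAdd X] (μ : Measure X) [SFinite μ]
    {f : X → ℝ} (hf : Measurable f) (h : X) :
    ∫⁻ t, μ (exitSet {x | t < f x} h) = ∫⁻ x, ENNReal.ofReal (f x - f (x + h)) ∂μ := by
  let T : Set (ℝ × X) := {q | q.1 < f q.2 ∧ ¬ q.1 < f (q.2 + h)}
  have hT : MeasurableSet T :=
    (measurableSet_lt measurable_fst (hf.comp measurable_snd)).inter
      (measurableSet_lt measurable_fst (hf.comp (measurable_snd.add_const h))).compl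
  have hslice (x : X) : (·, x) ⁻¹' T = Ico (f (x + h)) (f x) := by
    ext t
    simp [T, and_comm]
  calc ∫⁻ t, μ (exitSet {x | t < f x} h)
      = ∫⁻ x, volume ((·, x) ⁻¹' T) ∂μ := by
        rw [← Measure.prod_apply_symm hT, Measure.prod_apply hT]
        rfl
    _ = ∫⁻ x, ENNReal.ofReal (f x - f (x + h)) ∂μ := by simp only [hslice, Real.volume_Ico]

end Superlevel

variable {X : Type*} [NormedAddCommGroup X] [NormedSpace ℝ X]

lemma enorm_add_sub_le_lintegral_fderiv {F : Type*} [NormedAddCommGroup F] [NormedSpace ℝ F]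
    [CompleteSpace F] {f : X → F} (hf : ContDiff ℝ 1 f) (x h : X) :
    ‖f (x + h) - f x‖ₑ ≤ ∫⁻ s in Ioc (0 : ℝ) 1, ‖h‖ₑ * ‖fderiv ℝ f (x + s • h)‖ₑ := by
  have hderiv (s : ℝ) :
      HasDerivAt (fun s : ℝ => f (x + s • h)) (fderiv ℝ f (x + s • h) h) s := by
    have hline : HasDerivAt (fun s : ℝ => x + s • h) h s := by
      simpa using ((hasDerivAt_id s).smul_const h).const_add x
    exact (hf.differentiable one_ne_zero _).hasFDerivAt.comp_hasDerivAt s hline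
  have hcont : Continuous fun s : ℝ => fderiv ℝ f (x + s • h) h := by
    have := hf.continuous_fderiv one_ne_zero
    fun_prop
  have hftc : ∫ s in Ioc (0 : ℝ) 1, fderiv ℝ f (x + s • h) h = f (x + h) - f x := by
    simpa [intervalIntegral.integral_of_le] using
      intervalIntegral.integral_eq_sub_of_hasDerivAt (fun s _ => hderiv s)
        (hcont.intervalIntegrable 0 1)
  calc ‖f (x + h) - f x‖ₑ
      ≤ ∫⁻ s in Ioc (0 : ℝ) 1, ‖fderiv ℝ f (x + s • h) h‖ₑ :=
        hftc ▸ enorm_integral_le_lintegral_enorm _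
    _ ≤ ∫⁻ s in Ioc (0 : ℝ) 1, ‖h‖ₑ * ‖fderiv ℝ f (x + s • h)‖ₑ := by
        gcongr with s
        exact (ContinuousLinearMap.le_opENorm _ _).trans_eq (mul_comm _ _)

variable [MeasurableSpace X] [BorelSpace X] (μ : Measure X) [SFinite μ]

lemma lintegral_enorm_add_sub_le [μ.IsAddRightInvariant] {F : Type*} [NormedAddCommGroup F]
    [NormedSpace ℝ F] [CompleteSpace F] {f : X → F} (hf : ContDiff ℝ 1 f) (h : X) :
    ∫⁻ x, ‖f (x + h) - f x‖ₑ ∂μ ≤ ‖h‖ₑ * ∫⁻ x, ‖fderiv ℝ f x‖ₑ ∂μ := by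
  have hmeas : Measurable fun q : X × ℝ => ‖h‖ₑ * ‖fderiv ℝ f (q.1 + q.2 • h)‖ₑ := by
    have := hf.continuous_fderiv one_ne_zero
    have hcont : Continuous fun q : X × ℝ => fderiv ℝ f (q.1 + q.2 • h) := by fun_prop
    exact hcont.enorm.measurable.const_mul _
  calc ∫⁻ x, ‖f (x + h) - f x‖ₑ ∂μ
      ≤ ∫⁻ x, (∫⁻ s in Ioc (0 : ℝ) 1, ‖h‖ₑ * ‖fderiv ℝ f (x + s • h)‖ₑ) ∂μ :=
        lintegral_mono fun x => enorm_add_sub_le_lintegral_fderiv hf x h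
    _ = ∫⁻ s in Ioc (0 : ℝ) 1, ∫⁻ x, ‖h‖ₑ * ‖fderiv ℝ f (x + s • h)‖ₑ ∂μ :=
        lintegral_lintegral_swap hmeas.aemeasurable
    _ = ‖h‖ₑ * ∫⁻ x, ‖fderiv ℝ f x‖ₑ ∂μ := by
        simp [lintegral_const_mul' _ _ enorm_ne_top,
          lintegral_add_right_eq_self fun x => ‖fderiv ℝ f x‖ₑ]

lemma lintegral_measure_exitSet_superlevel_le [μ.IsAddRightInvariant] {f : X → ℝ}
    (hf : ContDiff ℝ 1 f) (h : X) :
    ∫⁻ t, μ (exitSet {x | t < f x} h) ≤ ‖h‖ₑ * ∫⁻ x, ‖fderiv ℝ f x‖ₑ ∂μ :=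
  calc ∫⁻ t, μ (exitSet {x | t < f x} h)
      = ∫⁻ x, ENNReal.ofReal (f x - f (x + h)) ∂μ :=
        lintegral_measure_exitSet_superlevel μ hf.continuous.measurable h
    _ ≤ ∫⁻ x, ‖f (x + h) - f x‖ₑ ∂μ := by
        gcongr with x
        rw [enorm_sub_rev]
        exact Real.ofReal_le_enorm _
    _ ≤ ‖h‖ₑ * ∫⁻ x, ‖fderiv ℝ f x‖ₑ ∂μ := lintegral_enorm_add_sub_le μ hf h

variable [SecondCountableTopology X]

lemma measurable_nonlocalPerimeter_superlevel (R ε : ℝ) {f : X → ℝ} (hf : Measurable f) :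
    Measurable fun t => nonlocalPerimeter μ R ε {x | t < f x} univ := by
  have hmeas := measurable_measure_exitSet_superlevel μ hf (measurable_const_smul (α := X) ε)
  simpa only [nonlocalPerimeter, inter_univ] using hmeas.lintegral_prod_right'.const_mul _

lemma lintegral_nonlocalPerimeter_superlevel_le [μ.IsAddRightInvariant] (R : ℝ) {ε : ℝ}
    (hε : 0 < ε) {f : X → ℝ} (hf : ContDiff ℝ 1 f) :
    ∫⁻ t, nonlocalPerimeter μ R ε {x | t < f x} univ ≤
      ENNReal.ofReal R * μ (closedBall 0 R) * ∫⁻ x, ‖fderiv ℝ f x‖ₑ ∂μ := by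
  have hmeas := measurable_measure_exitSet_superlevel μ hf.continuous.measurable
    (measurable_const_smul (α := X) ε)
  have hdirection (k : X) (hk : k ∈ closedBall 0 R) :
      ∫⁻ t, μ (exitSet {x | t < f x} (ε • k)) ≤
        ENNReal.ofReal ε * ENNReal.ofReal R * ∫⁻ x, ‖fderiv ℝ f x‖ₑ ∂μ := by
    refine (lintegral_measure_exitSet_superlevel_le μ hf (ε • k)).trans ?_
    rw [enorm_smul, Real.enorm_of_nonneg hε.le, ← ofReal_norm k]
    gcongr
    exact mem_closedBall_zero_iff.1 hk
  have hcancel : ENNReal.ofReal ε⁻¹ * ENNReal.ofReal ε = 1 := by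
    rw [← ENNReal.ofReal_mul (by positivity), inv_mul_cancel₀ hε.ne', ENNReal.ofReal_one]
  calc ∫⁻ t, nonlocalPerimeter μ R ε {x | t < f x} univ
      = ENNReal.ofReal ε⁻¹ *
          ∫⁻ k in closedBall 0 R, (∫⁻ t, μ (exitSet {x | t < f x} (ε • k))) ∂μ := by
        simp only [nonlocalPerimeter, inter_univ]
        rw [lintegral_const_mul _ hmeas.lintegral_prod_right',
          lintegral_lintegral_swap hmeas.aemeasurable]
    _ ≤ ENNReal.ofReal ε⁻¹ * ∫⁻ _ in closedBall (0 : X) R,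
          ENNReal.ofReal ε * ENNReal.ofReal R * ∫⁻ x, ‖fderiv ℝ f x‖ₑ ∂μ ∂μ := by
        gcongr 1
        exact setLIntegral_mono' measurableSet_closedBall hdirection
    _ = (ENNReal.ofReal ε⁻¹ * ENNReal.ofReal ε) *
          (ENNReal.ofReal R * μ (closedBall 0 R) * ∫⁻ x, ‖fderiv ℝ f x‖ₑ ∂μ) := by
        rw [setLIntegral_const]
        ring
    _ = ENNReal.ofReal R * μ (closedBall 0 R) * ∫⁻ x, ‖fderiv ℝ f x‖ₑ ∂μ := by
        rw [hcancel, one_mul]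

end Coarea

section DyadicCube

variable {ι : Type*}

/-- The dyadic cube of side `2 ^ p.1` whose lower corner is `2 ^ p.1 • p.2`; it is half-open, so
the cubes of each generation partition the space. -/
def dyadicCube (p : ℤ × (ι → ℤ)) : Set (EuclideanSpace ℝ ι) :=
  {x | ∀ i, ⌊x i / (2 : ℝ) ^ p.1⌋ = p.2 i}

/-- The index of the dyadic cube of side `2 ^ m` that contains `x`. -/
def dyadicIndex (m : ℤ) (x : EuclideanSpace ℝ ι) : ℤ × (ι → ℤ) :=
  (m, fun i => ⌊x i / (2 : ℝ) ^ m⌋)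

lemma mem_dyadicCube_iff_dyadicIndex_eq {p : ℤ × (ι → ℤ)} {x : EuclideanSpace ℝ ι} :
    x ∈ dyadicCube p ↔ dyadicIndex p.1 x = p :=
  ⟨fun h => Prod.ext rfl (funext h), fun h i => congrFun (congrArg Prod.snd h) i⟩

lemma mem_dyadicCube_dyadicIndex (m : ℤ) (x : EuclideanSpace ℝ ι) :
    x ∈ dyadicCube (dyadicIndex m x) := fun _ => rfl

lemma mem_dyadicCube_iff_mem_Ico {p : ℤ × (ι → ℤ)} {x : EuclideanSpace ℝ ι} :
    x ∈ dyadicCube p ↔ ∀ i, x i ∈ Ico (p.2 i * (2 : ℝ) ^ p.1) ((p.2 i + 1) * (2 : ℝ) ^ p.1) := by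
  have hside : (0 : ℝ) < 2 ^ p.1 := by positivity
  refine forall_congr' fun i => ?_
  rw [Int.floor_eq_iff, le_div_iff₀ hside, div_lt_iff₀ hside, mem_Ico]

lemma toLp_corner_mem_dyadicCube (p : ℤ × (ι → ℤ)) :
    WithLp.toLp 2 (fun i => p.2 i * (2 : ℝ) ^ p.1) ∈ dyadicCube p := fun i => by
  simp [mul_div_cancel_right₀ _ (zpow_ne_zero p.1 (two_ne_zero' ℝ))]

lemma floor_div_two_zpow_add (x : ℝ) (m : ℤ) (k : ℕ) :
    ⌊x / (2 : ℝ) ^ (m + k)⌋ = ⌊x / (2 : ℝ) ^ m⌋ / ((2 ^ k : ℕ) : ℤ) := by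
  rw [← Int.floor_div_natCast, zpow_add₀ two_ne_zero, div_div]
  simp only [zpow_natCast, Nat.cast_pow, Nat.cast_ofNat]

lemma dyadicCube_subset_dyadicCube {p q : ℤ × (ι → ℤ)} (hpq : p.1 ≤ q.1)
    {x : EuclideanSpace ℝ ι} (hp : x ∈ dyadicCube p) (hq : x ∈ dyadicCube q) :
    dyadicCube p ⊆ dyadicCube q := fun y hy i => by
  obtain ⟨k, hk⟩ := Int.le.dest hpq
  rw [← hq i, ← hk, floor_div_two_zpow_add, floor_div_two_zpow_add, hy i, hp i]

lemma convex_dyadicCube (p : ℤ × (ι → ℤ)) : Convex ℝ (dyadicCube p) :=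
  fun _ hx _ hy _ _ ha hb hab => mem_dyadicCube_iff_mem_Ico.2 fun i =>
    convex_Ico _ _ (mem_dyadicCube_iff_mem_Ico.1 hx i) (mem_dyadicCube_iff_mem_Ico.1 hy i) ha hb hab

lemma dyadicCube_eq_preimage_pi (p : ℤ × (ι → ℤ)) :
    dyadicCube p = WithLp.ofLp ⁻¹'
      univ.pi fun i => Ico (p.2 i * (2 : ℝ) ^ p.1) ((p.2 i + 1) * (2 : ℝ) ^ p.1) := by
  ext x
  simp only [mem_dyadicCube_iff_mem_Ico, mem_preimage, mem_univ_pi]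

lemma measurableSet_dyadicCube [Countable ι] (p : ℤ × (ι → ℤ)) :
    MeasurableSet (dyadicCube p) := by
  rw [dyadicCube_eq_preimage_pi]
  exact WithLp.measurable_ofLp 2 _ (MeasurableSet.univ_pi fun _ => measurableSet_Ico)

variable [Fintype ι]

lemma volume_dyadicCube (p : ℤ × (ι → ℤ)) :
    volume (dyadicCube p) = ENNReal.ofReal ((2 : ℝ) ^ p.1) ^ Fintype.card ι := by
  have hpi : MeasurableSet
      (univ.pi fun i => Ico (p.2 i * (2 : ℝ) ^ p.1) ((p.2 i + 1) * (2 : ℝ) ^ p.1)) :=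
    MeasurableSet.univ_pi fun _ => measurableSet_Ico
  rw [dyadicCube_eq_preimage_pi, (PiLp.volume_preserving_ofLp ι).measure_preimage
    hpi.nullMeasurableSet, Real.volume_pi_Ico]
  simp [add_mul]

lemma volume_dyadicCube_ne_zero (p : ℤ × (ι → ℤ)) : volume (dyadicCube p) ≠ 0 := by
  rw [volume_dyadicCube]
  exact pow_ne_zero _ (ENNReal.ofReal_pos.2 (by positivity)).ne'

lemma volume_dyadicCube_ne_top (p : ℤ × (ι → ℤ)) : volume (dyadicCube p) ≠ ⊤ := by
  rw [volume_dyadicCube]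
  exact ENNReal.pow_ne_top ENNReal.ofReal_ne_top

lemma dist_le_of_mem_dyadicCube {p : ℤ × (ι → ℤ)} {x y : EuclideanSpace ℝ ι}
    (hx : x ∈ dyadicCube p) (hy : y ∈ dyadicCube p) :
    dist x y ≤ √(Fintype.card ι) * (2 : ℝ) ^ p.1 := by
  rw [mem_dyadicCube_iff_mem_Ico] at hx hy
  have hcoord (i : ι) : dist (x i) (y i) ≤ (2 : ℝ) ^ p.1 := by
    have := Real.dist_le_of_mem_Icc (Ico_subset_Icc_self (hx i)) (Ico_subset_Icc_self (hy i))
    linarith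
  calc dist x y ≤ √(∑ _ : ι, ((2 : ℝ) ^ p.1) ^ 2) := by
        rw [EuclideanSpace.dist_eq]
        gcongr with i
        exact hcoord i
    _ = √(Fintype.card ι) * (2 : ℝ) ^ p.1 := by
        rw [Finset.sum_const, nsmul_eq_mul, Finset.card_univ, Real.sqrt_mul (by positivity),
          Real.sqrt_sq (by positivity)]

lemma exists_lt_volume_dyadicCube [Nonempty ι] {v : ℝ≥0∞} (hv : v ≠ ⊤) :
    ∃ b : ℤ, ∀ p : ℤ × (ι → ℤ), b ≤ p.1 → v < volume (dyadicCube p) := by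
  obtain ⟨N, hN⟩ := ENNReal.exists_nat_gt hv
  refine ⟨N, fun p hp => hN.trans_le ?_⟩
  have hside : (N : ℝ≥0∞) ≤ ENNReal.ofReal ((2 : ℝ) ^ p.1) := by
    rw [← ENNReal.ofReal_natCast]
    gcongr
    calc (N : ℝ) ≤ 2 ^ N := mod_cast Nat.lt_two_pow_self.le
      _ ≤ (2 : ℝ) ^ p.1 := by
        rw [← zpow_natCast]
        exact zpow_le_zpow_right₀ one_le_two hp
  rw [volume_dyadicCube]
  calc (N : ℝ≥0∞) ≤ (N : ℝ≥0∞) ^ Fintype.card ι := mod_cast Nat.le_self_pow Fintype.card_ne_zero N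
    _ ≤ ENNReal.ofReal ((2 : ℝ) ^ p.1) ^ Fintype.card ι := by gcongr

lemma exists_dyadicCube_subset_of_isOpen {ι : Type*} [Finite ι]
    {E : Set (EuclideanSpace ℝ ι)} (hE : IsOpen E) {x : EuclideanSpace ℝ ι} (hx : x ∈ E) :
    ∃ m : ℤ, dyadicCube (dyadicIndex m x) ⊆ E := by
  cases nonempty_fintype ι
  obtain ⟨ρ, hρ, hball⟩ := Metric.isOpen_iff.1 hE x hx
  have hlim : Filter.Tendsto (fun j : ℕ => √(Fintype.card ι) * (2⁻¹ : ℝ) ^ j) Filter.atTop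
      (nhds 0) := by
    simpa using (tendsto_pow_atTop_nhds_zero_of_lt_one (by norm_num)
      (by norm_num : (2⁻¹ : ℝ) < 1)).const_mul √(Fintype.card ι)
  obtain ⟨j, hj⟩ := (hlim.eventually_lt_const hρ).exists
  refine ⟨-j, fun y hy => hball (mem_ball.2 ?_)⟩
  calc dist y x ≤ √(Fintype.card ι) * (2 : ℝ) ^ (-j : ℤ) :=
        dist_le_of_mem_dyadicCube hy (mem_dyadicCube_dyadicIndex _ x)
    _ < ρ := by simpa using hj

end DyadicCube

section StoppingCube

variable {ι : Type*} [Fintype ι]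

/-- The Calderón–Zygmund stopping condition: `E` has density greater than `θ` in the dyadic cube
of index `p`, but at most `θ` in each strictly larger dyadic cube that contains it. -/
def IsStoppingCube (θ : ℝ≥0∞) (E : Set (EuclideanSpace ℝ ι)) (p : ℤ × (ι → ℤ)) : Prop :=
  θ * volume (dyadicCube p) < volume (E ∩ dyadicCube p) ∧
    ∀ q : ℤ × (ι → ℤ), p.1 < q.1 → dyadicCube p ⊆ dyadicCube q →
      volume (E ∩ dyadicCube q) ≤ θ * volume (dyadicCube q)

variable {θ : ℝ≥0∞} {E : Set (EuclideanSpace ℝ ι)}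

lemma exists_isStoppingCube [Nonempty ι] (hθ0 : θ ≠ 0) (hθ1 : θ < 1) (hE : IsOpen E)
    (hfin : volume E ≠ ⊤) {x : EuclideanSpace ℝ ι} (hx : x ∈ E) :
    ∃ p, IsStoppingCube θ E p ∧ x ∈ dyadicCube p := by
  let Dense (m : ℤ) : Prop := θ * volume (dyadicCube (dyadicIndex m x)) <
    volume (E ∩ dyadicCube (dyadicIndex m x))
  have hsmall : ∃ m, Dense m := by
    obtain ⟨m, hm⟩ := exists_dyadicCube_subset_of_isOpen hE hx
    refine ⟨m, ?_⟩
    simpa only [Dense, inter_eq_right.2 hm, one_mul] using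
      ENNReal.mul_lt_mul_left (volume_dyadicCube_ne_zero (dyadicIndex m x))
        (volume_dyadicCube_ne_top _) hθ1
  have hlarge : ∃ b, ∀ m, Dense m → m ≤ b := by
    obtain ⟨b, hb⟩ := exists_lt_volume_dyadicCube (ι := ι) (ENNReal.div_ne_top hfin hθ0)
    refine ⟨b, fun m hm => le_of_not_ge fun hbm => ?_⟩
    have hvol : volume E < θ * volume (dyadicCube (dyadicIndex m x)) := by
      rw [mul_comm]
      exact (ENNReal.div_lt_iff (.inl hθ0) (.inl hθ1.ne_top)).1 (hb (dyadicIndex m x) hbm)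
    exact (hvol.trans (hm.trans_le (measure_mono inter_subset_left))).false
  obtain ⟨m, hm, hmax⟩ := Int.exists_greatest_of_bdd hlarge hsmall
  have hxm := mem_dyadicCube_dyadicIndex m x
  refine ⟨dyadicIndex m x, ⟨hm, fun q hmq hsub => le_of_not_gt fun hq => hmq.not_ge ?_⟩, hxm⟩
  rw [← mem_dyadicCube_iff_dyadicIndex_eq.1 (hsub hxm)] at hq
  exact hmax q.1 hq

namespace IsStoppingCube

lemma eq_of_mem {p q : ℤ × (ι → ℤ)} (hp : IsStoppingCube θ E p) (hq : IsStoppingCube θ E q)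
    {x : EuclideanSpace ℝ ι} (hxp : x ∈ dyadicCube p) (hxq : x ∈ dyadicCube q) : p = q := by
  rcases lt_trichotomy p.1 q.1 with hlt | heq | hgt
  · exact absurd (hp.2 q hlt (dyadicCube_subset_dyadicCube hlt.le hxp hxq)) hq.1.not_ge
  · rw [← mem_dyadicCube_iff_dyadicIndex_eq.1 hxp, ← mem_dyadicCube_iff_dyadicIndex_eq.1 hxq, heq]
  · exact absurd (hq.2 p hgt (dyadicCube_subset_dyadicCube hgt.le hxq hxp)) hp.1.not_ge

lemma volume_inter_le {p : ℤ × (ι → ℤ)} (hp : IsStoppingCube θ E p) :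
    volume (E ∩ dyadicCube p) ≤ 2 ^ Fintype.card ι * θ * volume (dyadicCube p) := by
  let parent := dyadicIndex (p.1 + 1) (WithLp.toLp 2 fun i => p.2 i * (2 : ℝ) ^ p.1)
  have hlt : p.1 < parent.1 := lt_add_one p.1
  have hsub : dyadicCube p ⊆ dyadicCube parent :=
    dyadicCube_subset_dyadicCube hlt.le (toLp_corner_mem_dyadicCube p)
      (mem_dyadicCube_dyadicIndex _ _)
  have hvol : volume (dyadicCube parent) = 2 ^ Fintype.card ι * volume (dyadicCube p) := by
    rw [volume_dyadicCube, volume_dyadicCube, ← mul_pow, ← ENNReal.ofReal_ofNat,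
      ← ENNReal.ofReal_mul zero_le_two, mul_comm, ← zpow_add_one₀ two_ne_zero]
    rfl
  calc volume (E ∩ dyadicCube p)
      ≤ volume (E ∩ dyadicCube parent) := by gcongr
    _ ≤ θ * volume (dyadicCube parent) := hp.2 parent hlt hsub
    _ = 2 ^ Fintype.card ι * θ * volume (dyadicCube p) := by rw [hvol]; ring

end IsStoppingCube

end StoppingCube

section Boxing

lemma half_measure_le_measure_diff {X : Type*} [MeasurableSpace X] {μ : Measure X} {E Q : Set X}
    (hE : MeasurableSet E) (hQ : μ Q ≠ ⊤) (hle : μ (E ∩ Q) ≤ 2⁻¹ * μ Q) :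
    2⁻¹ * μ Q ≤ μ (Q \ E) := by
  have hhalf : 2⁻¹ * μ Q ≠ ⊤ := ENNReal.mul_ne_top (by simp) hQ
  refine (ENNReal.add_le_add_iff_left hhalf).1 ?_
  calc 2⁻¹ * μ Q + 2⁻¹ * μ Q = μ Q := by rw [← add_mul, ENNReal.inv_two_add_inv_two, one_mul]
    _ = μ (E ∩ Q) + μ (Q \ E) := by rw [inter_comm, measure_inter_add_sdiff Q hE]
    _ ≤ 2⁻¹ * μ Q + μ (Q \ E) := by gcongr

variable {ι : Type*} [Fintype ι] [Nonempty ι] {E : Set (EuclideanSpace ℝ ι)}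

-- With threshold `(2 ^ (d + 1))⁻¹`, maximality bounds the density of `E` by `2⁻¹` from above.
lemma IsStoppingCube.ofReal_side_pow_le {p : ℤ × (ι → ℤ)}
    (hp : IsStoppingCube (2 ^ (Fintype.card ι + 1))⁻¹ E p) (hE : MeasurableSet E) {n : ℕ}
    (hn : 0 ≤ n + p.1) :
    ENNReal.ofReal ((2 : ℝ) ^ p.1) ^ (Fintype.card ι - 1) ≤ 2 ^ (Fintype.card ι + 2) *
      nonlocalPerimeter volume √(Fintype.card ι) ((2 : ℝ) ^ n)⁻¹ E (dyadicCube p) := by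
  have hiso := measure_inter_mul_measure_diff_le volume hE (measurableSet_dyadicCube p)
    (convex_dyadicCube p) (R := √(Fintype.card ι)) (ε := ((2 : ℝ) ^ n)⁻¹) (ℓ := (2 : ℝ) ^ p.1)
    (N := 2 ^ (n + p.1).toNat) (by positivity) (by
      rw [Nat.cast_pow, Nat.cast_ofNat, ← zpow_natCast, Int.toNat_of_nonneg hn,
        zpow_add₀ two_ne_zero, zpow_natCast]
      field_simp) fun x hx y hy => dist_le_of_mem_dyadicCube hx hy
  have hhalf : volume (E ∩ dyadicCube p) ≤ 2⁻¹ * volume (dyadicCube p) := by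
    have hθ : (2 : ℝ≥0∞) ^ Fintype.card ι * (2 ^ (Fintype.card ι + 1))⁻¹ = 2⁻¹ := by
      rw [pow_succ, ENNReal.mul_inv (by simp) (by simp), ← mul_assoc,
        ENNReal.mul_inv_cancel (by simp) (by simp), one_mul]
    exact hθ ▸ hp.volume_inter_le
  have hdiff := half_measure_le_measure_diff hE (volume_dyadicCube_ne_top p) hhalf
  have hprod := (mul_le_mul' hp.1.le hdiff).trans hiso
  obtain ⟨e, he⟩ := Nat.exists_eq_succ_of_ne_zero (Fintype.card_ne_zero (α := ι))
  rw [finrank_euclideanSpace, volume_dyadicCube] at hprod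
  rw [he] at hprod ⊢
  set a := ENNReal.ofReal ((2 : ℝ) ^ p.1)
  have ha : a ≠ 0 := (ENNReal.ofReal_pos.2 (by positivity)).ne'
  have hsplit : (2 ^ (e + 1 + 1))⁻¹ * a ^ (e + 1) * (2⁻¹ * a ^ (e + 1)) =
      a ^ (e + 1 + 1) * ((2 ^ (e + 1 + 2))⁻¹ * a ^ e) := by
    rw [pow_succ 2 (e + 1 + 1), ENNReal.mul_inv (by simp) (by simp)]
    ring
  rw [hsplit, ENNReal.mul_le_mul_iff_right (pow_ne_zero _ ha)
    (ENNReal.pow_ne_top ENNReal.ofReal_ne_top)] at hprod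
  exact (ENNReal.inv_mul_le_iff (by simp) (by simp)).1 hprod

lemma sum_ofReal_side_pow_le (hE : MeasurableSet E)
    (s : Finset {p // IsStoppingCube (2 ^ (Fintype.card ι + 1))⁻¹ E p}) {n : ℕ}
    (hn : ∀ p ∈ s, 0 ≤ n + p.1.1) :
    ∑ p ∈ s, ENNReal.ofReal ((2 : ℝ) ^ p.1.1) ^ (Fintype.card ι - 1) ≤ 2 ^ (Fintype.card ι + 2) *
      nonlocalPerimeter volume √(Fintype.card ι) ((2 : ℝ) ^ n)⁻¹ E univ := by
  have hdisj : (s : Set {p // IsStoppingCube (2 ^ (Fintype.card ι + 1))⁻¹ E p}).PairwiseDisjoint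
      fun p => dyadicCube p.1 := fun p _ q _ hpq =>
    disjoint_left.2 fun x hxp hxq => hpq (Subtype.ext (p.2.eq_of_mem q.2 hxp hxq))
  calc ∑ p ∈ s, ENNReal.ofReal ((2 : ℝ) ^ p.1.1) ^ (Fintype.card ι - 1)
      ≤ ∑ p ∈ s, 2 ^ (Fintype.card ι + 2) *
          nonlocalPerimeter volume √(Fintype.card ι) ((2 : ℝ) ^ n)⁻¹ E (dyadicCube p.1) :=
        Finset.sum_le_sum fun p hp => p.2.ofReal_side_pow_le hE (hn p hp)
    _ ≤ 2 ^ (Fintype.card ι + 2) *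
          nonlocalPerimeter volume √(Fintype.card ι) ((2 : ℝ) ^ n)⁻¹ E univ := by
        rw [← Finset.mul_sum]
        gcongr
        exact sum_nonlocalPerimeter_le _ _ _ hE s (fun p => measurableSet_dyadicCube p.1) hdisj

lemma tsum_ofReal_side_pow_le_liminf (hE : MeasurableSet E) :
    ∑' p : {p // IsStoppingCube (2 ^ (Fintype.card ι + 1))⁻¹ E p},
        ENNReal.ofReal ((2 : ℝ) ^ p.1.1) ^ (Fintype.card ι - 1) ≤
      2 ^ (Fintype.card ι + 2) * Filter.liminf (fun n : ℕ =>
        nonlocalPerimeter volume √(Fintype.card ι) ((2 : ℝ) ^ n)⁻¹ E univ) Filter.atTop := by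
  rw [← ENNReal.liminf_const_mul_of_ne_top (by simp), ENNReal.tsum_eq_iSup_sum]
  refine iSup_le fun s => Filter.le_liminf_of_le (by isBoundedDefault) ?_
  have hfine : ∀ᶠ n : ℕ in Filter.atTop, ∀ p ∈ s, 0 ≤ n + p.1.1 :=
    (Filter.eventually_all_finset s).2 fun p _ =>
      (Filter.eventually_ge_atTop p.1.1.natAbs).mono fun n hn => by lia
  exact hfine.mono fun n hn => sum_ofReal_side_pow_le hE s hn

/-- **Gustin's boxing inequality**, with the limit of nonlocal perimeters as perimeter. -/
lemma hausdorffContent_le_liminf_nonlocalPerimeter {d : ℕ} (hd : 2 ≤ d)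
    {E : Set (EuclideanSpace ℝ (Fin d))} (hE : IsOpen E) (hfin : volume E ≠ ⊤) :
    hausdorffContent d ((d : ℝ) - 1) E ≤ ENNReal.ofReal √d ^ (d - 1) * 2 ^ (d + 2) *
      Filter.liminf (fun n : ℕ => nonlocalPerimeter volume √d ((2 : ℝ) ^ n)⁻¹ E univ)
        Filter.atTop := by
  have : NeZero d := ⟨by lia⟩
  have hexp : (d : ℝ) - 1 = (d - 1 : ℕ) := by rw [Nat.cast_sub (by lia), Nat.cast_one]
  have hexp_pos : 0 < (d : ℝ) - 1 := by rw [hexp]; exact_mod_cast (by lia : 0 < d - 1)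
  have hcover : E ⊆ ⋃ p : {p // IsStoppingCube (2 ^ (d + 1))⁻¹ E p},
      closedBall (WithLp.toLp 2 fun i => p.1.2 i * (2 : ℝ) ^ p.1.1) (√d * (2 : ℝ) ^ p.1.1) := by
    intro x hx
    obtain ⟨p, hp, hxp⟩ := exists_isStoppingCube (θ := (2 ^ (d + 1))⁻¹) (by simp)
      (ENNReal.inv_lt_one.2 (one_lt_pow₀ ENNReal.one_lt_two d.succ_ne_zero)) hE hfin hx
    have hdist := dist_le_of_mem_dyadicCube hxp (toLp_corner_mem_dyadicCube p)
    rw [Fintype.card_fin] at hdist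
    exact mem_iUnion.2 ⟨⟨p, hp⟩, hdist⟩
  calc hausdorffContent d ((d : ℝ) - 1) E
      ≤ ∑' p : {p // IsStoppingCube (2 ^ (d + 1))⁻¹ E p},
          ENNReal.ofReal ((√d * (2 : ℝ) ^ p.1.1) ^ ((d : ℝ) - 1)) :=
        hausdorffContent_le_tsum hexp_pos (fun p => by positivity) hcover
    _ = ENNReal.ofReal √d ^ (d - 1) * ∑' p : {p // IsStoppingCube (2 ^ (d + 1))⁻¹ E p},
          ENNReal.ofReal ((2 : ℝ) ^ p.1.1) ^ (d - 1) := by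
        rw [← ENNReal.tsum_mul_left]
        refine tsum_congr fun p => ?_
        rw [hexp, Real.rpow_natCast, ENNReal.ofReal_pow (by positivity),
          ENNReal.ofReal_mul (by positivity), mul_pow]
    _ ≤ _ := by
        have hsum := tsum_ofReal_side_pow_le_liminf hE.measurableSet
        rw [Fintype.card_fin] at hsum
        rw [mul_assoc]
        gcongr

end Boxing

section Superlevel

lemma lintegral_hausdorffContent_superlevel_le {d : ℕ} (hd : 2 ≤ d)
    {f : EuclideanSpace ℝ (Fin d) → ℝ} (hf : ContDiff ℝ 1 f)
    (hfin : ∀ t > 0, volume {x | t < f x} ≠ ⊤) :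
    ∫⁻ t in Ioi (0 : ℝ), hausdorffContent d ((d : ℝ) - 1) {x | t < f x} ≤
      ENNReal.ofReal √d ^ (d - 1) * 2 ^ (d + 2) * (ENNReal.ofReal √d *
        volume (closedBall (0 : EuclideanSpace ℝ (Fin d)) √d)) * ∫⁻ x, ‖fderiv ℝ f x‖ₑ := by
  set K : ℝ≥0∞ := ENNReal.ofReal √d ^ (d - 1) * 2 ^ (d + 2)
  have hK : K ≠ ⊤ := by finiteness
  let perimeter (n : ℕ) (t : ℝ) : ℝ≥0∞ :=
    nonlocalPerimeter volume √d ((2 : ℝ) ^ n)⁻¹ {x | t < f x} univ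
  have hmeas (n : ℕ) : Measurable (perimeter n) :=
    measurable_nonlocalPerimeter_superlevel volume _ _ hf.continuous.measurable
  calc ∫⁻ t in Ioi (0 : ℝ), hausdorffContent d ((d : ℝ) - 1) {x | t < f x}
      ≤ ∫⁻ t in Ioi (0 : ℝ), K * Filter.liminf (perimeter · t) Filter.atTop :=
        setLIntegral_mono' measurableSet_Ioi fun t ht =>
          hausdorffContent_le_liminf_nonlocalPerimeter hd
            (isOpen_lt continuous_const hf.continuous) (hfin t ht)
    _ ≤ K * Filter.liminf (fun n => ∫⁻ t in Ioi (0 : ℝ), perimeter n t) Filter.atTop := by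
        rw [lintegral_const_mul' _ _ hK]
        gcongr
        exact lintegral_liminf_le hmeas
    _ ≤ K * Filter.liminf (fun _ : ℕ => ENNReal.ofReal √d *
          volume (closedBall (0 : EuclideanSpace ℝ (Fin d)) √d) * ∫⁻ x, ‖fderiv ℝ f x‖ₑ)
          Filter.atTop := by
        gcongr K * ?_
        exact Filter.liminf_le_liminf <| .of_forall fun n => (setLIntegral_le_lintegral _ _).trans
          (lintegral_nonlocalPerimeter_superlevel_le volume _ (by positivity) hf)
    _ = _ := by rw [Filter.liminf_const, mul_assoc K]

theorem integral_content_superlevel_le_general (d : ℕ) (hd : 2 ≤ d) :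
    ∃ C : ℝ≥0∞, 0 < C ∧ C < ⊤ ∧ ∀ f : EuclideanSpace ℝ (Fin d) → ℝ,
      ContDiff ℝ 1 f → (∀ t > 0, volume {x | t < f x} ≠ ⊤) →
      ∫⁻ t in Ioi (0 : ℝ), hausdorffContent d ((d : ℝ) - 1) {x | t < f x} ≤
        C * ∫⁻ x, ‖fderiv ℝ f x‖ₑ := by
  have hsqrt : 0 < √(d : ℝ) := Real.sqrt_pos.2 (by exact_mod_cast (by lia : 0 < d))
  have hball := measure_closedBall_pos volume (0 : EuclideanSpace ℝ (Fin d)) hsqrt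
  have hball_fin := measure_closedBall_lt_top (μ := volume)
    (x := (0 : EuclideanSpace ℝ (Fin d))) (r := √d)
  exact ⟨_, by positivity, by finiteness, fun f => lintegral_hausdorffContent_superlevel_le hd⟩

lemma measure_superlevel_ne_top_of_hasCompactSupport {X : Type*} [TopologicalSpace X]
    [MeasurableSpace X] {μ : Measure X} [IsFiniteMeasureOnCompacts μ] {f : X → ℝ}
    (hf : HasCompactSupport f) {t : ℝ} (ht : 0 ≤ t) : μ {x | t < f x} ≠ ⊤ :=
  ((measure_mono fun _ hx => subset_tsupport f (ht.trans_lt hx).ne').trans_lt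
    hf.isCompact.measure_lt_top).ne

end Superlevel

/-- `∫_0^∞ H^{d-1}_∞({f > t}) dt ≲ ‖∇f‖_{L^1}`. -/
theorem integral_content_superlevel_le (d : ℕ) (hd : 2 ≤ d) :
    ∃ C : ℝ≥0∞, 0 < C ∧ C < ⊤ ∧ ∀ f : EuclideanSpace ℝ (Fin d) → ℝ,
      ContDiff ℝ (⊤ : ℕ∞) f → HasCompactSupport f →
      ∫⁻ t in Set.Ioi (0 : ℝ), hausdorffContent d ((d : ℝ) - 1) {x | t < f x} ≤
        C * ENNReal.ofReal (∫ x, ‖fderiv ℝ f x‖) := by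
  obtain ⟨C, hC, hC_top, hle⟩ := integral_content_superlevel_le_general d hd
  refine ⟨C, hC, hC_top, fun f hf hsupp => ?_⟩
  have hf₁ : ContDiff ℝ 1 f := hf.of_le (mod_cast le_top)
  have hint : Integrable (fderiv ℝ f) :=
    (hf₁.continuous_fderiv one_ne_zero).integrable_of_hasCompactSupport (hsupp.fderiv ℝ)
  rw [ofReal_integral_norm_eq_lintegral_enorm hint]
  exact hle f hf₁ fun t ht =>
    measure_superlevel_ne_top_of_hasCompactSupport hsupp (le_of_lt ht)
end
end
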